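/- arXiv:2002.02483 — 9 statements merged into one kernel-verified Lean document; each statement's English description precedes it below -/
import Mathlib

section
/- For an arbitrary family of nonempty topological spaces (X_a)_{a ∈ A}, the product space Π_{a∈A} X_a is compact and normal if and only if each factor X_a is compact and normal. -/
/-!
The key point is a criterion for normality of a compact space `X`: it is normal as soon as there is
a continuous map `f` to a Hausdorff space such that `f x = f y` forces the closures of `{x}` and
`{y}` to meet. Indeed such an `f` sends disjoint closed sets to disjoint compact sets, which can be
separated in the target (`normalSpace_of_closure_inter`). Conversely, on any normal space the
evaluation map `x ↦ (g ↦ g x)` into `C(X, ℝ) → ℝ` has this property, by Urysohn's lemma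
(`closure_inter_of_forall_continuousMap_eq`). The criterion passes to products because the closure
of a point in a product is the product of the closures, and compactness does by Tychonoff's theorem.

For the other direction, each factor is a continuous retract of the product, up to homeomorphism.
-/

/-- In a normal space, two points on which all continuous real functions agree have a common
specialization. -/
theorem closure_inter_of_forall_continuousMap_eq {X : Type*} [TopologicalSpace X] [NormalSpace X]
    {x y : X} (h : ∀ g : C(X, ℝ), g x = g y) :
    (closure {x} ∩ closure {y} : Set X).Nonempty := by
  by_contra hn
  obtain ⟨g, h0, h1, -⟩ := exists_continuous_zero_one_of_isClosed
    (isClosed_closure (s := ({x} : Set X))) (isClosed_closure (s := ({y} : Set X)))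
    (Set.disjoint_iff_inter_eq_empty.2 (Set.not_nonempty_iff_eq_empty.1 hn))
  have hx : g x = 0 := h0 (subset_closure rfl)
  have hy : g y = 1 := h1 (subset_closure rfl)
  have := h g
  rw [hx, hy] at this
  exact zero_ne_one this

theorem normalSpace_of_closure_inter {X K : Type*} [TopologicalSpace X] [CompactSpace X]
    [TopologicalSpace K] [T2Space K] {f : X → K} (hf : Continuous f)
    (h : ∀ x y, f x = f y → (closure {x} ∩ closure {y} : Set X).Nonempty) :
    NormalSpace X where
  normal C D hC hD hCD := by
    have hdisj : Disjoint (f '' C) (f '' D) := by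
      rw [Set.disjoint_left]
      rintro _ ⟨x, hx, rfl⟩ ⟨y, hy, hxy⟩
      obtain ⟨z, hzx, hzy⟩ := h x y hxy.symm
      exact Set.disjoint_left.1 hCD
        (closure_minimal (Set.singleton_subset_iff.2 hx) hC hzx)
        (closure_minimal (Set.singleton_subset_iff.2 hy) hD hzy)
    exact ((SeparatedNhds.of_isCompact_isCompact (hC.isCompact.image hf)
      (hD.isCompact.image hf) hdisj).preimage hf).mono
      (Set.subset_preimage_image f C) (Set.subset_preimage_image f D)

/-- A retract, up to homeomorphism, of a normal space is normal: separate the preimages under the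
retraction `r` and pull the open sets back along the section `s`. -/
theorem normalSpace_of_leftInverse {X Y : Type*} [TopologicalSpace X] [TopologicalSpace Y]
    [NormalSpace X] {r : X → Y} {s : Y → X} (hr : Continuous r) (hs : Continuous s)
    (hrs : Function.LeftInverse r s) : NormalSpace Y where
  normal C D hC hD hCD := by
    refine ((normal_separation (hC.preimage hr) (hD.preimage hr) (hCD.preimage r)).preimage
      hs).mono ?_ ?_
    · intro y hy
      simpa [hrs y] using hy
    · intro y hy
      simpa [hrs y] using hy

theorem compact_normal_pi_iff {A : Type*} (X : A → Type*)
    [∀ a, TopologicalSpace (X a)] (hne : ∀ a, Nonempty (X a)) :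
    (CompactSpace (∀ a, X a) ∧ NormalSpace (∀ a, X a)) ↔
      ∀ a, CompactSpace (X a) ∧ NormalSpace (X a) := by
  classical
  constructor
  · rintro ⟨hc, hn⟩ a
    let p : ∀ a, X a := fun a => (hne a).some
    have hinv : Function.LeftInverse (fun x : ∀ a, X a => x a) (Function.update p a) :=
      fun y => Function.update_self a y p
    exact ⟨hinv.surjective.compactSpace (continuous_apply a),
      normalSpace_of_leftInverse (continuous_apply a) (continuous_const.update a continuous_id)
        hinv⟩
  · intro h
    have hc : ∀ a, CompactSpace (X a) := fun a => (h a).1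
    have hn : ∀ a, NormalSpace (X a) := fun a => (h a).2
    refine ⟨inferInstance, normalSpace_of_closure_inter
      (f := fun (x : ∀ a, X a) (a : A) (g : C(X a, ℝ)) => g (x a)) (by fun_prop) ?_⟩
    intro x y hxy
    have key : ∀ a, (closure {x a} ∩ closure {y a} : Set (X a)).Nonempty := fun a =>
      closure_inter_of_forall_continuousMap_eq fun g => congrFun (congrFun hxy a) g
    choose z hzx hzy using key
    refine ⟨z, ?_, ?_⟩
    · rw [← Set.univ_pi_singleton, closure_pi_set]
      exact fun a _ => hzx a
    · rw [← Set.univ_pi_singleton, closure_pi_set]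
      exact fun a _ => hzy a
end

section
/- If f : X → Y is a continuous, surjective, very open map of topological spaces and X is normal, then Y is normal. -/
/-- A map is very open if it carries disjoint open sets to disjoint open sets. -/
def VeryOpen {X Y : Type*} [TopologicalSpace X] [TopologicalSpace Y]
    (f : X → Y) : Prop :=
  ∀ U V : Set X, IsOpen U → IsOpen V → Disjoint U V →
    IsOpen (f '' U) ∧ IsOpen (f '' V) ∧ Disjoint (f '' U) (f '' V)

theorem normal_of_veryOpen_image
    (X Y : Type*) [TopologicalSpace X] [TopologicalSpace Y]
    (f : X → Y) (hcont : Continuous f) (hsurj : Function.Surjective f)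
    (hvo : VeryOpen f) (hX : NormalSpace X) :
    NormalSpace Y := by
  refine ⟨fun A B hA hB hAB => ?_⟩
  -- Separate the preimages of `A` and `B` in `X` and push the separation forward along `f`.
  obtain ⟨U, V, hU, hV, hAU, hBV, hUV⟩ := hX.normal (f ⁻¹' A) (f ⁻¹' B)
    (hA.preimage hcont) (hB.preimage hcont) (hAB.preimage f)
  obtain ⟨hfU, hfV, hd⟩ := hvo U V hU hV hUV
  refine ⟨f '' U, f '' V, hfU, hfV, ?_, ?_, hd⟩
  · rw [← Set.image_preimage_eq A hsurj]
    exact Set.image_mono hAU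
  · rw [← Set.image_preimage_eq B hsurj]
    exact Set.image_mono hBV
end

section
/- Every countably compact topological space is loosely compact, and every loosely compact topological space is pseudocompact. -/
/-!
If infinitely many distinct members `S 0, S 1, …` of a discrete family of nonempty sets existed,
the open sets `interior (⋂ k ≥ n, (S k)ᶜ)` would increase with `n` and cover the space, since a
neighborhood meeting at most one `S m` misses all `S k` with `k > m`. A finite subcover would put
the whole space in the complement of some nonempty `S N`.

If `f` is continuous and unbounded, `|f|` takes values `a 0, a 1, …` with `a n + 1 < a (n + 1)`.
The fibers of `|f|` over the `a n` are closed, nonempty and pairwise distinct, and they form a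
discrete family because an interval of length `1` contains at most one `a n`.
-/

/-- A space is countably compact if every countable open cover has a
finite subcover. -/
def CountablyCompact (X : Type*) [TopologicalSpace X] : Prop :=
  ∀ U : ℕ → Set X, (∀ n, IsOpen (U n)) → (⋃ n, U n) = Set.univ →
    ∃ t : Finset ℕ, (⋃ n ∈ t, U n) = Set.univ

/-- A family of subsets is discrete if every point has a neighborhood
meeting at most one member of the family. -/
def DiscreteFamily {X : Type*} [TopologicalSpace X] (𝒮 : Set (Set X)) : Prop :=
  ∀ x : X, ∃ U ∈ nhds x, {s ∈ 𝒮 | (U ∩ s).Nonempty}.Subsingleton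

/-- A space is loosely compact if every discrete family of nonempty
closed subsets is finite. -/
def LooselyCompact (X : Type*) [TopologicalSpace X] : Prop :=
  ∀ 𝒮 : Set (Set X), (∀ s ∈ 𝒮, IsClosed s) → (∀ s ∈ 𝒮, s.Nonempty) →
    DiscreteFamily 𝒮 → 𝒮.Finite

/-- A space is pseudocompact if every continuous real-valued function
on it is bounded. -/
def Pseudocompact (X : Type*) [TopologicalSpace X] : Prop :=
  ∀ f : X → ℝ, Continuous f → ∃ M : ℝ, ∀ x, |f x| ≤ M

theorem CountablyCompact.looselyCompact {X : Type*} [TopologicalSpace X]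
    (hX : CountablyCompact X) : LooselyCompact X := by
  intro 𝒮 _ hne hd
  by_contra hinf
  let S := Set.Infinite.natEmbedding 𝒮 hinf
  have hcover : (⋃ n, interior {y | ∀ k ≥ n, y ∉ (S k : Set X)}) = Set.univ := by
    refine Set.eq_univ_of_forall fun x => ?_
    obtain ⟨U, hU, hsub⟩ := hd x
    obtain ⟨n, hn⟩ : ∃ n, ∀ k ≥ n, ¬ (U ∩ (S k : Set X)).Nonempty := by
      by_cases h : ∃ m, (U ∩ (S m : Set X)).Nonempty
      · obtain ⟨m, hm⟩ := h
        refine ⟨m + 1, fun k hk hk' => ?_⟩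
        have : k = m := S.injective (Subtype.ext (hsub ⟨(S k).2, hk'⟩ ⟨(S m).2, hm⟩))
        omega
      · exact ⟨0, fun k _ hk => h ⟨k, hk⟩⟩
    refine Set.mem_iUnion.2 ⟨n, mem_interior_iff_mem_nhds.2 ?_⟩
    exact Filter.mem_of_superset hU fun y hy k hk hyk => hn k hk ⟨y, hy, hyk⟩
  obtain ⟨t, ht⟩ := hX _ (fun _ => isOpen_interior) hcover
  obtain ⟨y, hy⟩ := hne _ (S (t.sup id)).2
  have hyt := ht.symm ▸ Set.mem_univ y
  simp only [Set.mem_iUnion] at hyt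
  obtain ⟨n, hn, hyn⟩ := hyt
  exact interior_subset hyn _ (Finset.le_sup (f := id) hn) hy

theorem LooselyCompact.pseudocompact {X : Type*} [TopologicalSpace X]
    (hX : LooselyCompact X) : Pseudocompact X := by
  intro f hf
  by_contra! hunb
  choose u hu using hunb
  let x : ℕ → X := fun n => (fun z => u (|f z| + 1))^[n] (u 0)
  let a : ℕ → ℝ := fun n => |f (x n)|
  have hstep (n : ℕ) : a n + 1 < a (n + 1) := by
    simp only [a, x, Function.iterate_succ_apply']
    exact hu _
  have hmono : StrictMono a := strictMono_nat_of_lt_succ fun n => by linarith [hstep n]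
  have hsep {m n : ℕ} (h : m < n) : a m + 1 < a n :=
    (hstep m).trans_le (hmono.monotone h)
  have hinj : Function.Injective fun n => {y | |f y| = a n} := by
    intro m n h
    have hm : x m ∈ {y | |f y| = a n} := (Set.ext_iff.1 h (x m)).1 rfl
    exact hmono.injective hm
  refine Set.infinite_range_of_injective hinj (hX _ ?_ ?_ ?_)
  · rintro _ ⟨n, rfl⟩
    exact isClosed_eq hf.abs continuous_const
  · rintro _ ⟨n, rfl⟩
    exact ⟨x n, rfl⟩
  · intro z
    refine ⟨{y | |(|f y| - |f z|)| < 1 / 2}, ?_, ?_⟩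
    · exact (isOpen_lt (hf.abs.sub continuous_const).abs continuous_const).mem_nhds (by simp)
    · rintro _ ⟨⟨m, rfl⟩, y, hy, hym⟩ _ ⟨⟨n, rfl⟩, w, hw, hwn⟩
      simp only [Set.mem_ofPred_eq, abs_lt] at hy hw hym hwn
      rcases lt_trichotomy m n with h | rfl | h
      · linarith [hsep h]
      · rfl
      · linarith [hsep h]

theorem countablyCompact_implies_looselyCompact_implies_pseudocompact
    (X : Type*) [TopologicalSpace X] :
    (CountablyCompact X → LooselyCompact X) ∧
      (LooselyCompact X → Pseudocompact X) := by
  exact ⟨CountablyCompact.looselyCompact, LooselyCompact.pseudocompact⟩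
end

section
/- Every pseudocompact normal topological space is loosely compact. -/
theorem looselyCompact_of_pseudocompact_normal
    (X : Type*) [TopologicalSpace X]
    (hp : Pseudocompact X) (hn : NormalSpace X) :
    LooselyCompact X := by
  intro 𝒮 hclosed hne hdisc
  by_contra hinf
  let e : ℕ ↪ 𝒮 := Set.Infinite.natEmbedding 𝒮 hinf
  let S : ℕ → Set X := fun n => (e n : Set X)
  have hS : Function.Injective S := Subtype.val_injective.comp e.injective
  -- Taking `a = b = x` gives pairwise disjointness of the `S n`.
  have hloc : ∀ x : X, ∃ U ∈ nhds x, ∀ a ∈ U, ∀ b ∈ U, ∀ m n : ℕ,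
      a ∈ S m → b ∈ S n → m = n := by
    intro x
    obtain ⟨U, hU, hsub⟩ := hdisc x
    exact ⟨U, hU, fun a ha b hb m n ham hbn =>
      hS (hsub ⟨(e m).2, a, ha, ham⟩ ⟨(e n).2, b, hb, hbn⟩)⟩
  have hlf : LocallyFinite S := by
    intro x
    obtain ⟨U, hU, hUS⟩ := hloc x
    refine ⟨U, hU, Set.Subsingleton.finite ?_⟩
    rintro m ⟨a, ham, haU⟩ n ⟨b, hbn, hbU⟩
    exact hUS a haU b hbU m n ham hbn
  have hF : IsClosed (⋃ n, S n) := hlf.isClosed_iUnion fun n => hclosed _ (e n).2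
  have hidx : ∀ x : (⋃ n, S n : Set X), ∃ n, (x : X) ∈ S n := fun x => Set.mem_iUnion.1 x.2
  choose idx hidx using hidx
  have hcont : Continuous fun x => (idx x : ℝ) := by
    refine IsLocallyConstant.continuous ((IsLocallyConstant.iff_eventually_eq _).2 fun x => ?_)
    obtain ⟨U, hU, hUS⟩ := hloc x
    filter_upwards [continuous_subtype_val.continuousAt.preimage_mem_nhds hU] with y hy
    exact congrArg Nat.cast (hUS y hy x (mem_of_mem_nhds hU) _ _ (hidx y) (hidx x))
  obtain ⟨g, hg⟩ := ContinuousMap.exists_restrict_eq hF ⟨_, hcont⟩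
  obtain ⟨M, hM⟩ := hp g g.continuous
  obtain ⟨n, hn⟩ := exists_nat_gt M
  obtain ⟨x, hx⟩ := hne _ (e n).2
  have hxF : x ∈ ⋃ n, S n := Set.mem_iUnion.2 ⟨n, hx⟩
  have hgx : g x = (idx ⟨x, hxF⟩ : ℝ) := DFunLike.congr_fun hg ⟨x, hxF⟩
  obtain ⟨U, hU, hUS⟩ := hloc x
  have hxn : idx ⟨x, hxF⟩ = n :=
    hUS x (mem_of_mem_nhds hU) x (mem_of_mem_nhds hU) _ _ (hidx ⟨x, hxF⟩) hx
  rw [hxn] at hgx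
  have hle := (le_abs_self (g x)).trans (hM x)
  linarith
end

section
/- If the product X × Y of two topological spaces is loosely compact, then the projection π_Y : X × Y → Y is z-closed, i.e., the image under π_Y of every zero set of X × Y is closed in Y. -/
/-- In a loosely compact space, no sequence can have the property that every point has an open
neighborhood containing at most one term of the sequence. -/
theorem LooselyCompact.not_discrete_seq {Z : Type*} [TopologicalSpace Z] (h : LooselyCompact Z)
    (p : ℕ → Z) (hp : ∀ z : Z, ∃ U : Set Z, IsOpen U ∧ z ∈ U ∧
      ∀ m n, p m ∈ U → p n ∈ U → m = n) : False := by
  have hmem : ∀ (U : Set Z), IsOpen U → ∀ n, (U ∩ closure {p n}).Nonempty → p n ∈ U := by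
    rintro U hU n ⟨z, hzU, hz⟩
    obtain ⟨w, hwU, rfl⟩ := mem_closure_iff.1 hz U hU hzU
    exact hwU
  have hinj : Function.Injective fun n => closure {p n} := by
    intro m n hmn
    obtain ⟨U, hU, hmU, hu⟩ := hp (p m)
    refine hu m n hmU (hmem U hU n ⟨p m, hmU, ?_⟩)
    have : p m ∈ closure {p m} := subset_closure rfl
    simpa only [hmn] using this
  refine Set.infinite_range_of_injective hinj (h _ ?_ ?_ ?_)
  · rintro _ ⟨n, rfl⟩
    exact isClosed_closure
  · rintro _ ⟨n, rfl⟩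
    exact ⟨p n, subset_closure rfl⟩
  · intro z
    obtain ⟨U, hU, hz, hu⟩ := hp z
    refine ⟨U, hU.mem_nhds hz, ?_⟩
    rintro _ ⟨⟨m, rfl⟩, hm⟩ _ ⟨⟨n, rfl⟩, hn⟩
    rw [hu m n (hmem U hU m hm) (hmem U hU n hn)]

theorem zClosed_proj_of_looselyCompact_prod
    (X Y : Type*) [TopologicalSpace X] [TopologicalSpace Y]
    (h : LooselyCompact (X × Y)) :
    ∀ f : X × Y → ℝ, Continuous f →
      IsClosed (Prod.snd '' (f ⁻¹' {0})) := by
  intro f hf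
  refine isClosed_of_closure_subset fun y₀ hy₀ => ?_
  by_contra hy
  have hne : ∀ x, f (x, y₀) ≠ 0 := fun x hx => hy ⟨(x, y₀), hx, rfl⟩
  let g : X × Y → ℝ := fun p => f p / f (p.1, y₀)
  have hg : Continuous g := hf.div (by fun_prop) fun p => hne p.1
  obtain ⟨p, hp0, hp⟩ := exists_seq_of_forall_finset_exists (fun p : X × Y => g p = 0)
    (fun p q => 1 / 2 < g (p.1, q.2)) (by
      intro s _
      have hev : ∀ᶠ y in nhds y₀, ∀ p ∈ s, 1 / 2 < g (p.1, y) := by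
        rw [Filter.eventually_all_finset]
        intro p _
        have hc : Continuous fun y => g (p.1, y) := by fun_prop
        refine hc.continuousAt.eventually (lt_mem_nhds ?_)
        simp only [g, div_self (hne p.1)]
        norm_num
      obtain ⟨y, ⟨q, hq, rfl⟩, hy⟩ :=
        ((mem_closure_iff_frequently.1 hy₀).and_eventually hev).exists
      have hq0 : f q = 0 := hq
      exact ⟨q, by simp [g, hq0], hy⟩)
  refine h.not_discrete_seq p fun z => ?_
  have hz : g ⁻¹' Metric.ball (g z) (1 / 4) ∈ nhds (z.1, z.2) :=
    hg.continuousAt (Metric.ball_mem_nhds _ (by norm_num))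
  obtain ⟨U, V, hU, hzU, hV, hzV, hUV⟩ := mem_nhds_prod_iff'.1 hz
  have key : ∀ m n, p m ∈ U ×ˢ V → p n ∈ U ×ˢ V → ¬ m < n := by
    intro m n hm hn hmn
    have h1 := hUV hm
    have h2 := hUV (show ((p m).1, (p n).2) ∈ U ×ˢ V from ⟨hm.1, hn.2⟩)
    have h3 := hp m n hmn
    simp only [Set.mem_preimage, Metric.mem_ball, Real.dist_eq, abs_lt, hp0] at h1 h2
    linarith [h1.1, h2.2]
  exact ⟨U ×ˢ V, hU.prod hV, ⟨hzU, hzV⟩, fun m n hm hn =>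
    le_antisymm (not_lt.1 (key n m hn hm)) (not_lt.1 (key m n hm hn))⟩
end

section
/- If the product X × Y of two topological spaces is pseudocompact and normal and Y is T1, then the projection π_Y : X × Y → Y is a closed map. -/
open Filter Topology Set

/-- Without a cluster point, the closures of the `{z n}` form a locally finite family, and they are
disjoint because they lie over distinct points of the T1 space `Y`. Hence `z n ↦ n` extends to a
continuous function on the (closed) union of these closures, and then, by Tietze, to `X × Y`. -/
lemma exists_mapClusterPt_of_injective_snd {X Y : Type*} [TopologicalSpace X] [TopologicalSpace Y]
    [T1Space Y] [NormalSpace (X × Y)] (hp : Pseudocompact (X × Y)) (z : ℕ → X × Y)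
    (hz : Function.Injective fun n => (z n).2) : ∃ p, MapClusterPt p atTop z := by
  by_contra! hno
  have hlf : LocallyFinite fun n => ({z n} : Set (X × Y)) := by
    intro p
    have h := hno p
    rw [mapClusterPt_iff_frequently] at h
    push Not at h
    obtain ⟨s, hs, hev⟩ := h
    refine ⟨s, hs, ?_⟩
    rw [← Nat.cofinite_eq_atTop, eventually_cofinite] at hev
    refine hev.subset ?_
    rintro n ⟨q, rfl, hq⟩
    simpa using hq
  have hlf' := hlf.closure
  have hsnd : ∀ n, ∀ p ∈ closure {z n}, p.2 = (z n).2 := fun n p h =>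
    closure_minimal (s := {z n}) (t := Prod.snd ⁻¹' {(z n).2}) (by simp)
      (isClosed_singleton.preimage continuous_snd) h
  let g : X × Y → ℝ := fun p => (Function.invFun (fun n => (z n).2) p.2 : ℕ)
  have hg : ∀ n, ∀ p ∈ closure {z n}, g p = n := by
    intro n p h
    simp only [g, hsnd n p h]
    exact_mod_cast Function.leftInverse_invFun hz n
  have hcont : ContinuousOn g (⋃ n, closure {z n}) :=
    hlf'.continuousOn_iUnion (fun _ => isClosed_closure)
      fun n => (continuousOn_const (c := (n : ℝ))).congr (hg n)
  have hcl : IsClosed (⋃ n, closure {z n}) := hlf'.isClosed_iUnion fun _ => isClosed_closure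
  obtain ⟨G, hG⟩ := ContinuousMap.exists_restrict_eq hcl ⟨_, hcont.domRestrict⟩
  obtain ⟨M, hM⟩ := hp G G.continuous
  obtain ⟨n, hn⟩ := exists_nat_gt M
  have hzn : z n ∈ closure {z n} := subset_closure rfl
  have h1 : G (z n) = g (z n) := DFunLike.congr_fun hG ⟨z n, mem_iUnion.2 ⟨n, hzn⟩⟩
  have h2 := hM (z n)
  rw [h1, hg n _ hzn] at h2
  linarith [le_abs_self (n : ℝ)]

theorem closed_proj_of_pseudocompact_normal_prod
    (X Y : Type*) [TopologicalSpace X] [TopologicalSpace Y]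
    (hp : Pseudocompact (X × Y)) (hn : NormalSpace (X × Y)) [T1Space Y] :
    IsClosedMap (Prod.snd : X × Y → Y) := by
  intro F hF
  refine isClosed_of_closure_subset fun y hy => ?_
  by_contra hyF
  obtain ⟨U, V, hU, hV, hyU, hFV, hUV⟩ := hn.normal (Prod.snd ⁻¹' {y}) F
    (isClosed_singleton.preimage continuous_snd) hF
    (disjoint_left.2 fun p hp' hpF => hyF ⟨p, hpF, hp'⟩)
  obtain ⟨z, hzF, hzU⟩ := exists_seq_of_forall_finset_exists (fun p : X × Y => p ∈ F)
    (fun p q => (p.1, q.2) ∈ U) (by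
      intro s _
      have hW : ∀ᶠ y' in 𝓝 y, ∀ p ∈ s, (p.1, y') ∈ U := by
        rw [Filter.eventually_all_finset]
        intro p _
        exact (hU.preimage (Continuous.prodMk_right p.1)).mem_nhds (hyU rfl)
      obtain ⟨_, hb, p, hpF, rfl⟩ := mem_closure_iff_nhds.1 hy _ hW
      exact ⟨p, hpF, hb⟩)
  have hsep : ∀ m n, m < n → (z m).2 ≠ (z n).2 := fun m n hmn h =>
    disjoint_left.1 hUV (hzU m n hmn) (h ▸ hFV (hzF m))
  have hinj : Function.Injective fun n => (z n).2 := fun m n h =>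
    le_antisymm (not_lt.1 fun hlt => hsep n m hlt h.symm) (not_lt.1 fun hlt => hsep m n hlt h)
  obtain ⟨p, hpz⟩ := exists_mapClusterPt_of_injective_snd hp z hinj
  have hpF : p ∈ F := hF.mem_of_mapClusterPt hpz (Eventually.of_forall hzF)
  obtain ⟨A, hA, B, hB, hAB⟩ := mem_nhds_prod_iff.1 (hV.mem_nhds (hFV hpF))
  have hfreq := mapClusterPt_iff_frequently.1 hpz _ (prod_mem_nhds hA hB)
  obtain ⟨m, hm⟩ := hfreq.exists
  obtain ⟨n, hmn, hn'⟩ := frequently_atTop.1 hfreq (m + 1)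
  exact disjoint_left.1 hUV (hzU m n hmn) (hAB ⟨hm.1, hn'.2⟩)
end

section
/- Let κ be an infinite cardinal. A topological space X is κ-paracompact and normal if and only if every open cover of X of cardinality at most κ has a locally finite shrinking: for every family of open sets (U_i)_{i∈I} with |I| ≤ κ covering X there exists a family of open sets (V_i)_{i∈I} covering X such that for each i the closure of V_i is contained in U_i and the family (V_i) is locally finite. -/
/-!
For the forward direction, a locally finite open refinement of `U` is amalgamated along a choice of
containing member of `U`, which gives a locally finite open cover indexed like `U`. Since this
cover is point-finite, the shrinking lemma for normal spaces (`exists_iUnion_eq_closure_subset`)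
applies, and a shrinking of a locally finite family is locally finite.

Conversely, the set of members of a locally finite shrinking is a locally finite refinement.
Normality is obtained from two-element covers: if `s`, `t` are disjoint and closed, and `V₀`, `V₁`
shrink the cover `sᶜ`, `tᶜ`, then the complements of the closures of `V₀` and `V₁` separate
`s` and `t`, being disjoint because `V₀` and `V₁` cover the space.
-/

universe u

/-- A space is `κ`-paracompact if every open cover of cardinality at most `κ`
has a locally finite open refinement. -/
def KappaParacompact (X : Type u) [TopologicalSpace X] (κ : Cardinal.{u}) : Prop :=
  ∀ (ι : Type u) (U : ι → Set X), Cardinal.mk ι ≤ κ → (∀ i, IsOpen (U i)) →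
    (⋃ i, U i) = Set.univ →
    ∃ 𝒱 : Set (Set X), (∀ V ∈ 𝒱, IsOpen V) ∧ ⋃₀ 𝒱 = Set.univ ∧
      (∀ V ∈ 𝒱, ∃ i, V ⊆ U i) ∧ LocallyFinite (fun V : 𝒱 => (V : Set X))

open Set

/-- A locally finite open refinement can be reindexed by the original cover: collect, for each
`i`, the members assigned to `U i`. -/
lemma KappaParacompact.precise_refinement {X : Type u} [TopologicalSpace X] {κ : Cardinal.{u}}
    (h : KappaParacompact X κ) {ι : Type u} {U : ι → Set X} (hι : Cardinal.mk ι ≤ κ)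
    (hU : ∀ i, IsOpen (U i)) (hc : (⋃ i, U i) = univ) :
    ∃ W : ι → Set X, (∀ i, IsOpen (W i)) ∧ (⋃ i, W i) = univ ∧ (∀ i, W i ⊆ U i) ∧
      LocallyFinite W := by
  obtain ⟨𝒱, ho, hcov, href, hlf⟩ := h ι U hι hU hc
  choose f hf using fun V : 𝒱 => href V V.2
  refine ⟨fun i => ⋃ (V : 𝒱) (_ : f V = i), (V : Set X),
    fun i => isOpen_iUnion fun V => isOpen_iUnion fun _ => ho V V.2, ?_, ?_, ?_⟩
  · refine eq_univ_of_forall fun x => ?_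
    obtain ⟨V, hV, hx⟩ := mem_sUnion.1 (hcov ▸ mem_univ x)
    simp only [mem_iUnion]
    exact ⟨f ⟨V, hV⟩, ⟨V, hV⟩, rfl, hx⟩
  · intro i
    refine iUnion₂_subset fun V hV => ?_
    exact hV ▸ hf V
  · intro x
    obtain ⟨N, hN, hfin⟩ := hlf x
    refine ⟨N, hN, (hfin.image f).subset ?_⟩
    rintro i ⟨y, hy, hyN⟩
    simp only [mem_iUnion] at hy
    obtain ⟨V, hV, hyV⟩ := hy
    exact ⟨V, ⟨y, hyV, hyN⟩, hV⟩

theorem kappaParacompact_normal_iff_locallyFinite_shrinking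
    (X : Type u) [TopologicalSpace X] (κ : Cardinal.{u})
    (hκ : Cardinal.aleph0 ≤ κ) :
    (KappaParacompact X κ ∧ NormalSpace X) ↔
      ∀ (ι : Type u) (U : ι → Set X), Cardinal.mk ι ≤ κ → (∀ i, IsOpen (U i)) →
        (⋃ i, U i) = Set.univ →
        ∃ V : ι → Set X, (∀ i, IsOpen (V i)) ∧ (⋃ i, V i) = Set.univ ∧
          (∀ i, closure (V i) ⊆ U i) ∧ LocallyFinite V := by
  constructor
  · rintro ⟨hP, hN⟩ ι U hι hU hc
    obtain ⟨W, hWo, hWc, hWU, hWf⟩ := hP.precise_refinement hι hU hc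
    obtain ⟨V, hVc, hVo, hVW⟩ := exists_iUnion_eq_closure_subset hWo hWf.point_finite hWc
    exact ⟨V, hVo, hVc, fun i => (hVW i).trans (hWU i),
      hWf.subset fun i => subset_closure.trans (hVW i)⟩
  · intro h
    refine ⟨fun ι U hι hU hc => ?_, ⟨fun s t hs ht hst => ?_⟩⟩
    · obtain ⟨V, hVo, hVc, hVU, hVf⟩ := h ι U hι hU hc
      refine ⟨range V, forall_mem_range.2 hVo, by rwa [sUnion_range],
        forall_mem_range.2 fun i => ⟨i, subset_closure.trans (hVU i)⟩, hVf.on_range⟩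
    · obtain ⟨V, hVo, hVc, hVU, -⟩ := h (ULift.{u} Bool) (fun b => cond b.down sᶜ tᶜ)
        ((Cardinal.lt_aleph0_of_finite _).le.trans hκ)
        (by rintro ⟨_ | _⟩ <;> simp [hs, ht])
        (by
          refine eq_univ_of_forall fun x => mem_iUnion.2 ?_
          by_cases hx : x ∈ s
          · exact ⟨⟨false⟩, disjoint_left.1 hst hx⟩
          · exact ⟨⟨true⟩, hx⟩)
      refine ⟨(closure (V ⟨true⟩))ᶜ, (closure (V ⟨false⟩))ᶜ, isClosed_closure.isOpen_compl,
        isClosed_closure.isOpen_compl, subset_compl_comm.1 (hVU ⟨true⟩),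
        subset_compl_comm.1 (hVU ⟨false⟩), disjoint_left.2 fun x hx₁ hx₂ => ?_⟩
      obtain ⟨⟨_ | _⟩, hx⟩ := mem_iUnion.1 (hVc ▸ mem_univ x)
      · exact hx₂ (subset_closure hx)
      · exact hx₁ (subset_closure hx)
end

section
/- Let X = Π_{n∈ℕ} X_n be a countable product of topological spaces, none of which is vacuously normal. If X is normal, then X is countably paracompact. -/
/-!
A set of the form `{x | x restricted to the coordinates < n lies in S}` is called an `n`-cylinder.

Let `G n` be a decreasing sequence of closed sets in `∏ X k` with empty intersection. Replacing
`G n` by the closure `C n` of the smallest `n`-cylinder containing it keeps the intersection empty,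
because a basic neighbourhood of a point constrains only finitely many coordinates
(`mem_closure_of_agree`). Choose disjoint nonempty closed sets `F k, H k` in each `X k` and put
`A₀ = ⋃ n, C n ∩ {x | x k ∈ F k for all k ≥ n}` and, with `H` in place of `F`, `A₁`. These unions
are locally finite, so `A₀` and `A₁` are closed; they are disjoint because no point is both
eventually in `F` and eventually in `H`. By normality there are open `U₀ ⊇ A₀` and `U₁ ⊇ A₁` with
disjoint closures. Fix `a k ∈ F k`, `b k ∈ H k`, and let `W n` be the set of those `x` for which
replacing the coordinates `≥ n` of `x` by those of `a` gives a point of `U₀`, and by those of `b` a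
point of `U₁`. Then `W n` is open and contains `C n ⊇ G n`. A point in all `closure (W n)` would, as
the coordinates `≥ n` are invisible to a fixed basic neighbourhood for large `n`, lie in both
`closure U₀` and `closure U₁`, which is impossible. So `W` is an expansion of `G`
(`exists_expansion`), and expansions yield countable paracompactness
(`countablyParacompact_of_expansion`).
-/

/-- A space is vacuously normal if it contains no pair of disjoint
nonempty closed subsets. -/
def VacuouslyNormal (X : Type*) [TopologicalSpace X] : Prop :=
  ∀ F H : Set X, IsClosed F → IsClosed H → F.Nonempty → H.Nonempty → ¬ Disjoint F H

/-- A space is countably paracompact if every countable open cover has a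
locally finite open refinement. -/
def CountablyParacompact (X : Type*) [TopologicalSpace X] : Prop :=
  ∀ U : ℕ → Set X, (∀ n, IsOpen (U n)) → (⋃ n, U n) = Set.univ →
    ∃ 𝒱 : Set (Set X), (∀ V ∈ 𝒱, IsOpen V) ∧ ⋃₀ 𝒱 = Set.univ ∧
      (∀ V ∈ 𝒱, ∃ n, V ⊆ U n) ∧ LocallyFinite (fun V : 𝒱 => (V : Set X))

open Set Topology

/-- The point whose coordinates are those of `x` below `n` and those of `t` from `n` on. -/
def glue {X : ℕ → Type*} (n : ℕ) (t x : ∀ k, X k) : ∀ k, X k :=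
  fun k => if k < n then x k else t k

theorem glue_of_lt {X : ℕ → Type*} {n k : ℕ} (t x : ∀ k, X k) (h : k < n) :
    glue n t x k = x k := if_pos h

theorem glue_of_le {X : ℕ → Type*} {n k : ℕ} (t x : ∀ k, X k) (h : n ≤ k) :
    glue n t x k = t k := if_neg (not_lt.2 h)

theorem continuous_glue {X : ℕ → Type*} [∀ n, TopologicalSpace (X n)] (n : ℕ) (t : ∀ k, X k) :
    Continuous (glue n t) := by
  refine continuous_pi fun k => ?_
  by_cases h : k < n
  · simpa only [glue, if_pos h] using continuous_apply k
  · simpa only [glue, if_neg h] using continuous_const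

/-- If `x` lies in the closure of every `D n`, and for large `n` each point of `D n` can be moved
into `E` by changing only coordinates `≥ n`, then `x` lies in the closure of `E`: a basic
neighbourhood of `x` does not see the coordinates `≥ n` once `n` is large. -/
theorem mem_closure_of_agree {X : ℕ → Type*} [∀ n, TopologicalSpace (X n)]
    {D : ℕ → Set (∀ k, X k)} {E : Set (∀ k, X k)} {x : ∀ k, X k} (m : ℕ)
    (hx : ∀ n, x ∈ closure (D n))
    (h : ∀ n, m ≤ n → ∀ d ∈ D n, ∃ e ∈ E, ∀ k < n, e k = d k) : x ∈ closure E := by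
  rw [mem_closure_iff]
  intro O hO hxO
  obtain ⟨I, u, hu, hsub⟩ := isOpen_pi_iff.1 hO x hxO
  let n := max m (I.sup id + 1)
  have hI : ∀ k ∈ I, k < n := fun k hk =>
    lt_of_lt_of_le (Nat.lt_succ_of_le (Finset.le_sup (f := id) hk)) (le_max_right _ _)
  obtain ⟨d, hdu, hd⟩ := mem_closure_iff.1 (hx n) ((I : Set ℕ).pi u)
    (isOpen_set_pi I.finite_toSet fun k hk => (hu k hk).1) fun k hk => (hu k hk).2
  obtain ⟨e, he, hed⟩ := h n (le_max_left _ _) d hd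
  refine ⟨e, hsub fun k hk => ?_, he⟩
  rw [hed k (hI k hk)]
  exact hdu k hk

theorem locallyFinite_of_antitone {Y : Type*} [TopologicalSpace Y] {C : ℕ → Set Y}
    (hC : ∀ n, IsClosed (C n)) (hanti : Antitone C) (hempty : ∀ x, ∃ n, x ∉ C n) :
    LocallyFinite C := by
  intro x
  obtain ⟨m, hm⟩ := hempty x
  refine ⟨(C m)ᶜ, (hC m).isOpen_compl.mem_nhds hm, (finite_lt_nat m).subset ?_⟩
  rintro n ⟨y, hyn, hym⟩
  by_contra hn
  exact hym (hanti (not_lt.1 hn) hyn)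

/-- The expansion property of decreasing sequences of closed sets implies countable
paracompactness. -/
theorem countablyParacompact_of_expansion {Y : Type*} [TopologicalSpace Y]
    (h : ∀ G : ℕ → Set Y, (∀ n, IsClosed (G n)) → Antitone G → (∀ x, ∃ n, x ∉ G n) →
      ∃ W : ℕ → Set Y, (∀ n, IsOpen (W n)) ∧ (∀ n, G n ⊆ W n) ∧ ∀ x, ∃ n, x ∉ closure (W n)) :
    CountablyParacompact Y := by
  intro U hU hcov
  have hmem : ∀ x, ∃ n, x ∈ U n := fun x => mem_iUnion.1 (hcov ▸ mem_univ x)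
  obtain ⟨W, hW, hGW, hWe⟩ := h (fun n => ⋂ i, ⋂ (_ : i < n), (U i)ᶜ)
    (fun n => isClosed_iInter fun i => isClosed_iInter fun _ => (hU i).isClosed_compl)
    (fun m n hmn x hx => by
      simp only [mem_iInter] at hx ⊢
      exact fun i hi => hx i (hi.trans_le hmn))
    (fun x => by
      obtain ⟨n, hn⟩ := hmem x
      refine ⟨n + 1, fun hx => ?_⟩
      simp only [mem_iInter] at hx
      exact hx n n.lt_succ_self hn)
  let V : ℕ → Set Y := fun n => U n ∩ ⋂ m ∈ Iic n, W m
  have hlf : LocallyFinite V := by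
    intro x
    obtain ⟨m, hm⟩ := hWe x
    refine ⟨(closure (W m))ᶜ, isClosed_closure.isOpen_compl.mem_nhds hm,
      (finite_lt_nat m).subset ?_⟩
    rintro n ⟨y, hyn, hym⟩
    by_contra hn
    exact hym (subset_closure (mem_iInter₂.1 hyn.2 m (mem_Iic.2 (not_lt.1 hn))))
  refine ⟨range V, ?_, ?_, ?_, hlf.on_range⟩
  · rintro _ ⟨n, rfl⟩
    exact (hU n).inter ((finite_Iic n).isOpen_biInter fun m _ => hW m)
  · refine eq_univ_of_forall fun x => ?_
    classical
    -- The least `n` with `x ∈ U n` works: `x` then lies in the `m`-th closed set for all `m ≤ n`.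
    refine ⟨V (Nat.find (hmem x)), mem_range_self _, Nat.find_spec (hmem x), ?_⟩
    refine mem_iInter₂.2 fun m hm => hGW m ?_
    simp only [mem_iInter]
    exact fun i hi => Nat.find_min (hmem x) (hi.trans_le hm)
  · rintro _ ⟨n, rfl⟩
    exact ⟨n, inter_subset_left⟩

/-- In a normal product whose factors contain pairs of disjoint nonempty closed sets, every
decreasing sequence of closed sets with empty intersection has an expansion. -/
theorem exists_expansion {X : ℕ → Type*} [∀ n, TopologicalSpace (X n)]
    [NormalSpace (∀ n, X n)] {F H : ∀ n, Set (X n)}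
    (hF : ∀ n, IsClosed (F n)) (hH : ∀ n, IsClosed (H n)) (hFH : ∀ n, Disjoint (F n) (H n))
    {a b : ∀ n, X n} (ha : ∀ n, a n ∈ F n) (hb : ∀ n, b n ∈ H n)
    (G : ℕ → Set (∀ n, X n)) (hG : ∀ n, IsClosed (G n)) (hanti : Antitone G)
    (hempty : ∀ x, ∃ n, x ∉ G n) :
    ∃ W : ℕ → Set (∀ n, X n), (∀ n, IsOpen (W n)) ∧ (∀ n, G n ⊆ W n) ∧
      ∀ x, ∃ n, x ∉ closure (W n) := by
  let D : ℕ → Set (∀ n, X n) := fun n => {x | ∃ g ∈ G n, ∀ k < n, g k = x k}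
  let C : ℕ → Set (∀ n, X n) := fun n => closure (D n)
  have hGC : ∀ n, G n ⊆ C n := fun n x hx => subset_closure ⟨x, hx, fun _ _ => rfl⟩
  have hCanti : Antitone C := fun m n hmn => closure_mono fun x ⟨g, hg, hgx⟩ =>
    ⟨g, hanti hmn hg, fun k hk => hgx k (hk.trans_le hmn)⟩
  have hCempty : ∀ x, ∃ n, x ∉ C n := by
    intro x
    by_contra! hx
    obtain ⟨m, hm⟩ := hempty x
    refine hm ((hG m).closure_eq ▸ mem_closure_of_agree m hx ?_)
    rintro n hmn d ⟨g, hg, hgd⟩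
    exact ⟨g, hanti hmn hg, hgd⟩
  have hCglue : ∀ n t, MapsTo (glue n t) (C n) (C n) := by
    intro n t
    refine MapsTo.closure ?_ (continuous_glue n t)
    rintro x ⟨g, hg, hgx⟩
    exact ⟨g, hg, fun k hk => (hgx k hk).trans (glue_of_lt t x hk).symm⟩
  let T : (∀ n, Set (X n)) → ℕ → Set (∀ n, X n) := fun S n => {x | ∀ k, n ≤ k → x k ∈ S k}
  let A : (∀ n, Set (X n)) → Set (∀ n, X n) := fun S => ⋃ n, C n ∩ T S n
  have hA : ∀ S : ∀ n, Set (X n), (∀ n, IsClosed (S n)) → IsClosed (A S) := by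
    intro S hS
    refine ((locallyFinite_of_antitone (fun n => isClosed_closure) hCanti hCempty).subset
      fun n => inter_subset_left).isClosed_iUnion fun n => isClosed_closure.inter ?_
    simp only [T, ofPred_forall]
    exact isClosed_iInter fun k => isClosed_iInter fun _ => (hS k).preimage (continuous_apply k)
  have hAglue : ∀ (S : ∀ n, Set (X n)) (t : ∀ n, X n), (∀ n, t n ∈ S n) →
      ∀ n, ∀ x ∈ C n, glue n t x ∈ A S := by
    intro S t ht n x hx
    refine mem_iUnion.2 ⟨n, hCglue n t hx, fun k hk => ?_⟩
    rw [glue_of_le t x hk]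
    exact ht k
  have hAdisj : A F ⊆ (A H)ᶜ := by
    intro x hxF hxH
    obtain ⟨n, -, hn⟩ := mem_iUnion.1 hxF
    obtain ⟨m, -, hm⟩ := mem_iUnion.1 hxH
    exact disjoint_left.1 (hFH (max n m)) (hn _ (le_max_left _ _)) (hm _ (le_max_right _ _))
  obtain ⟨U, hU, hFU, hUH⟩ := normal_exists_closure_subset (hA F hF) (hA H hH).isOpen_compl hAdisj
  obtain ⟨U', hU', hHU', hUU'⟩ := normal_exists_closure_subset (hA H hH)
    isClosed_closure.isOpen_compl (subset_compl_comm.1 hUH)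
  refine ⟨fun n => glue n a ⁻¹' U ∩ glue n b ⁻¹' U',
    fun n => (hU.preimage (continuous_glue n a)).inter (hU'.preimage (continuous_glue n b)),
    fun n x hx => ⟨hFU (hAglue F a ha n x (hGC n hx)), hHU' (hAglue H b hb n x (hGC n hx))⟩, ?_⟩
  intro x
  by_contra! hx
  refine hUU' (mem_closure_of_agree 0 hx ?_) (mem_closure_of_agree 0 hx ?_)
  · exact fun n _ d hd => ⟨_, hd.2, fun k hk => glue_of_lt b d hk⟩
  · exact fun n _ d hd => ⟨_, hd.1, fun k hk => glue_of_lt a d hk⟩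

theorem countablyParacompact_of_normal_countable_prod
    (X : ℕ → Type*) [∀ n, TopologicalSpace (X n)]
    (hvn : ∀ n, ¬ VacuouslyNormal (X n))
    (hnorm : NormalSpace (∀ n, X n)) :
    CountablyParacompact (∀ n, X n) := by
  simp only [VacuouslyNormal, not_forall, not_not] at hvn
  choose F H hF hH hFne hHne hFH using hvn
  choose a ha using hFne
  choose b hb using hHne
  exact countablyParacompact_of_expansion (exists_expansion hF hH hFH ha hb)
end

section
/- Let X = Π_{n∈ℕ} X_n be a countable product of topological spaces. If X is countably paracompact and each finite sub-product Π_{i<n} X_i is normal, then X is normal. -/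
open Set Topology

/-- The closed-set form of countable paracompactness, with `G n = (U n)ᶜ`: a decreasing sequence of
closed sets with empty intersection has a decreasing open expansion whose closures have empty
intersection. -/
theorem CountablyParacompact.exists_expansion {Y : Type*} [TopologicalSpace Y]
    (h : CountablyParacompact Y) (U : ℕ → Set Y) (hU : ∀ n, IsOpen (U n)) (hmono : Monotone U)
    (hcov : ⋃ n, U n = univ) :
    ∃ W : ℕ → Set Y, (∀ n, IsOpen (W n)) ∧ Antitone W ∧ (∀ n, (U n)ᶜ ⊆ W n) ∧
      ∀ x, ∃ n, x ∉ closure (W n) := by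
  obtain ⟨𝒱, hopen, hVcov, href, hlf⟩ := h U hU hcov
  refine ⟨fun n => ⋃₀ {V | V ∈ 𝒱 ∧ ¬ V ⊆ U n}, fun n => isOpen_sUnion fun V hV => hopen V hV.1,
    ?_, ?_, ?_⟩
  · intro m n hmn
    exact sUnion_subset_sUnion fun V hV => ⟨hV.1, fun hs => hV.2 (hs.trans (hmono hmn))⟩
  · intro n x hx
    obtain ⟨V, hV, hxV⟩ : x ∈ ⋃₀ 𝒱 := hVcov ▸ mem_univ x
    exact ⟨V, ⟨hV, fun hs => hx (hs hxV)⟩, hxV⟩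
  · intro x
    obtain ⟨N, hN, hfin⟩ := hlf x
    choose k hk using fun V : 𝒱 => href V V.2
    -- All of the finitely many members of `𝒱` meeting `N` lie in `U b`.
    obtain ⟨b, hb⟩ := (hfin.image k).bddAbove
    refine ⟨b, fun hx => ?_⟩
    obtain ⟨y, hyN, V, ⟨hV, hVb⟩, hyV⟩ := mem_closure_iff_nhds.1 hx N hN
    exact hVb ((hk ⟨V, hV⟩).trans (hmono (hb ⟨⟨V, hV⟩, ⟨y, hyV, hyN⟩, rfl⟩)))

section FiniteProjections

variable {X : ℕ → Type*}

/-- The projection of the full product onto the product of the first `n` factors. -/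
def finProj (X : ℕ → Type*) (n : ℕ) (x : ∀ n, X n) : ∀ i : Fin n, X i := fun i => x i

variable [∀ n, TopologicalSpace (X n)]

theorem continuous_finProj (n : ℕ) : Continuous (finProj X n) := by
  unfold finProj
  fun_prop

/-- A basic neighbourhood depends on finitely many coordinates, so it is a preimage of an open
set under every sufficiently late projection. -/
theorem exists_proj_notMem_closure {S : Set (∀ n, X n)} {x : ∀ n, X n} (hx : x ∉ closure S) :
    ∃ n, ∀ m ≥ n, finProj X m x ∉ closure (finProj X m '' S) := by
  obtain ⟨I, u, hu, hsub⟩ := isOpen_pi_iff.1 isClosed_closure.isOpen_compl x hx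
  refine ⟨I.sup id + 1, fun m hm hmem => ?_⟩
  have hV : IsOpen (Set.pi {i : Fin m | (i : ℕ) ∈ I} fun i => u i) :=
    isOpen_set_pi (toFinite _) fun i hi => (hu i hi).1
  obtain ⟨_, hy, s, hs, rfl⟩ := mem_closure_iff.1 hmem _ hV fun i hi => (hu i hi).2
  refine hsub (fun i hi => ?_) (subset_closure hs)
  have hle : i ≤ I.sup id := Finset.le_sup (f := id) hi
  exact hy ⟨i, by omega⟩ hi

/-- Late projections of a point approach the projections of a set only if earlier ones do. -/
theorem finProj_mem_closure_of_le {S : Set (∀ n, X n)} {x : ∀ n, X n} {m n : ℕ} (hmn : m ≤ n)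
    (hx : finProj X n x ∈ closure (finProj X n '' S)) :
    finProj X m x ∈ closure (finProj X m '' S) := by
  let r : (∀ i : Fin n, X i) → ∀ i : Fin m, X i := fun y i => y (Fin.castLE hmn i)
  have hr : Continuous r := continuous_pi fun i => continuous_apply (Fin.castLE hmn i)
  have := image_closure_subset_closure_image hr (mem_image_of_mem r hx)
  rwa [image_image] at this

/-- If every lift of a point of `C` lies in the open set `W`, then the closure of the exterior
of the projection of `W` misses `C`. Nonemptiness of the product is needed for lifts to exist. -/
theorem disjoint_closure_compl_closure_image [Nonempty (∀ n, X n)] {n : ℕ}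
    {W : Set (∀ n, X n)} (hW : IsOpen W) {C : Set (∀ i : Fin n, X i)}
    (hC : finProj X n ⁻¹' C ⊆ W) :
    Disjoint (closure (closure (finProj X n '' W))ᶜ) C := by
  rw [Set.disjoint_left]
  intro y hy hyC
  obtain ⟨x₀⟩ := ‹Nonempty (∀ n, X n)›
  -- A continuous section of the projection, filling the remaining coordinates from `x₀`.
  let s : (∀ i : Fin n, X i) → ∀ i, X i := fun z i => if h : i < n then z ⟨i, h⟩ else x₀ i
  have hs : Continuous s := by
    refine continuous_pi fun i => ?_
    by_cases h : i < n
    · simpa [s, h] using continuous_apply (⟨i, h⟩ : Fin n)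
    · simpa [s, h] using continuous_const
  have hps : ∀ z, finProj X n (s z) = z := fun z => by
    funext i
    simp [finProj, s]
  obtain ⟨z, hzW, hz⟩ := mem_closure_iff.1 hy _ (hW.preimage hs)
    (hC (by rw [mem_preimage, hps]; exact hyC))
  exact hz (subset_closure ⟨s z, hzW, hps z⟩)

/-- One half of the separation, symmetric in `A` and `B`: `A` is covered by countably many open
sets whose closures miss `B`, given a suitable expansion `W` of the sets on which the projections
fail to separate `A` from `B`. -/
theorem hasSeparatingCover_of_expansion [Nonempty (∀ n, X n)]
    (hfin : ∀ n : ℕ, NormalSpace (∀ i : Fin n, X i)) {A B : Set (∀ n, X n)}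
    {W : ℕ → Set (∀ n, X n)} (hW : ∀ n, IsOpen (W n)) (hanti : Antitone W)
    (hAB : ∀ n x, finProj X n x ∈ closure (finProj X n '' A) →
      finProj X n x ∈ closure (finProj X n '' B) → x ∈ W n)
    (hclosure : ∀ x, ∃ n, x ∉ closure (W n)) : HasSeparatingCover A B := by
  have key : ∀ n, ∃ u : Set (∀ i : Fin n, X i), IsOpen u ∧
      closure (closure (finProj X n '' W n))ᶜ ∩ closure (finProj X n '' A) ⊆ u ∧
      closure u ⊆ (closure (finProj X n '' B))ᶜ := by
    intro n
    have := hfin n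
    refine normal_exists_closure_subset (isClosed_closure.inter isClosed_closure)
      isClosed_closure.isOpen_compl fun y hy hyB => ?_
    exact Set.disjoint_left.1 (disjoint_closure_compl_closure_image (hW n)
      (C := closure (finProj X n '' A) ∩ closure (finProj X n '' B))
      fun x hx => hAB n x hx.1 hx.2) hy.1 ⟨hy.2, hyB⟩
  choose u huo hAu huB using key
  refine ⟨fun n => finProj X n ⁻¹' u n, fun x hx => ?_, fun n =>
    ⟨(huo n).preimage (continuous_finProj n), ?_⟩⟩
  · obtain ⟨m, hm⟩ := hclosure x
    obtain ⟨k, hk⟩ := exists_proj_notMem_closure hm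
    refine mem_iUnion.2 ⟨max m k, hAu _ ⟨subset_closure fun h => ?_, subset_closure ⟨x, hx, rfl⟩⟩⟩
    exact hk _ (le_max_right m k)
      (closure_mono (image_mono (hanti (le_max_left m k))) h)
  · rw [Set.disjoint_left]
    intro x hx hxB
    exact huB n ((continuous_finProj n).closure_preimage_subset _ hx) (subset_closure ⟨x, hxB, rfl⟩)

end FiniteProjections

theorem normal_of_countablyParacompact_prod_with_normal_finite_subproducts
    (X : ℕ → Type*) [∀ n, TopologicalSpace (X n)]
    (hcp : CountablyParacompact (∀ n, X n))
    (hfin : ∀ n : ℕ, NormalSpace (∀ i : Fin n, X i)) :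
    NormalSpace (∀ n, X n) := by
  refine ⟨fun A B hA hB hdisj => ?_⟩
  rcases A.eq_empty_or_nonempty with rfl | ⟨a, -⟩
  · exact SeparatedNhds.empty_left B
  have : Nonempty (∀ n, X n) := ⟨a⟩
  obtain ⟨W, hW, hanti, hUW, hcl⟩ := hcp.exists_expansion
    (fun n => (finProj X n ⁻¹' (closure (finProj X n '' A) ∩ closure (finProj X n '' B)))ᶜ)
    (fun n => ((isClosed_closure.inter isClosed_closure).preimage
      (continuous_finProj n)).isOpen_compl)
    (fun m n hmn x hx hx' => hx
      ⟨finProj_mem_closure_of_le hmn hx'.1, finProj_mem_closure_of_le hmn hx'.2⟩)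
    (by
      refine eq_univ_of_forall fun x => mem_iUnion.2 ?_
      by_cases hxA : x ∈ A
      · have hxB : x ∉ closure B := hB.closure_eq.symm ▸ Set.disjoint_left.1 hdisj hxA
        obtain ⟨n, hn⟩ := exists_proj_notMem_closure hxB
        exact ⟨n, fun h => hn n le_rfl h.2⟩
      · obtain ⟨n, hn⟩ := exists_proj_notMem_closure (hA.closure_eq.symm ▸ hxA : x ∉ closure A)
        exact ⟨n, fun h => hn n le_rfl h.1⟩)
  have hAB : ∀ n x, finProj X n x ∈ closure (finProj X n '' A) →
      finProj X n x ∈ closure (finProj X n '' B) → x ∈ W n :=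
    fun n x h₁ h₂ => hUW n (not_not_intro ⟨h₁, h₂⟩)
  exact hasSeparatingCovers_iff_separatedNhds.1
    ⟨hasSeparatingCover_of_expansion hfin hW hanti hAB hcl,
      hasSeparatingCover_of_expansion hfin hW hanti (fun n x h₁ h₂ => hAB n x h₂ h₁) hcl⟩
end
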